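/- With G₀(n) the group of a ∈ SL(v) acting trivially on the center (i.e., [au,av]=[u,v]) for n = n_{(c,r)} (single-block normal form) and n̂ its H-type counterpart obtained by replacing A(c,r) by its semisimple part normalized to c = i, one has G₀(n) ⊆ G₀(n̂), and consequently dim Aut(n) ≤ dim Aut(n̂). -/

import Mathlib

open Matrix

/-- The 2×2 real matrix representing a complex number `c`. -/
def Zmat (c : ℂ) : Matrix (Fin 2) (Fin 2) ℝ := !![c.re, c.im; -c.im, c.re]

/-- The `2r × 2r` real block-Jordan matrix `A(c,r)`: blocks `Z(c)` on the diagonal and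
`I₂` on the (block) subdiagonal. -/
def Amat (c : ℂ) (r : ℕ) : Matrix (Fin r × Fin 2) (Fin r × Fin 2) ℝ :=
  fun p q =>
    if p.1 = q.1 then Zmat c p.2 q.2
    else if (p.1 : ℕ) = (q.1 : ℕ) + 1 then (1 : Matrix (Fin 2) (Fin 2) ℝ) p.2 q.2
    else 0

/-- `Â(r)`: the block-diagonal matrix with all blocks `Z(i)`, giving the H-type
counterpart `n̂`. -/
def Ahat (r : ℕ) : Matrix (Fin r × Fin 2) (Fin r × Fin 2) ℝ :=
  fun p q => if p.1 = q.1 then Zmat Complex.I p.2 q.2 else 0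

/-- `[φ] = [[0, -I_{2r}],[I_{2r}, 0]]`, the matrix of the first bracket component. -/
def T1mat (r : ℕ) :
    Matrix ((Fin r × Fin 2) ⊕ (Fin r × Fin 2)) ((Fin r × Fin 2) ⊕ (Fin r × Fin 2)) ℝ :=
  Matrix.fromBlocks 0 (-1) 1 0

/-- `[ψ] = [[0, A],[-Aᵀ, 0]]`, the matrix of the second bracket component. -/
def T2mat {r : ℕ} (A : Matrix (Fin r × Fin 2) (Fin r × Fin 2) ℝ) :
    Matrix ((Fin r × Fin 2) ⊕ (Fin r × Fin 2)) ((Fin r × Fin 2) ⊕ (Fin r × Fin 2)) ℝ :=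
  Matrix.fromBlocks 0 A (-Aᵀ) 0

/-- The `ℝ²`-valued bracket `[u,v] = (φ(u,v), ψ(u,v))` on `v = ℝ^{4r}` determined by the
matrix `A`. -/
def brkt {r : ℕ} (A : Matrix (Fin r × Fin 2) (Fin r × Fin 2) ℝ)
    (u v : ((Fin r × Fin 2) ⊕ (Fin r × Fin 2)) → ℝ) : Fin 2 → ℝ :=
  ![u ⬝ᵥ (T1mat r).mulVec v, u ⬝ᵥ (T2mat A).mulVec v]

/-- `G₀`: the determinant-one linear maps of `v` preserving both component forms, i.e.
acting trivially on the center. -/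
def G0 {r : ℕ} (A : Matrix (Fin r × Fin 2) (Fin r × Fin 2) ℝ) :
    Set (Matrix ((Fin r × Fin 2) ⊕ (Fin r × Fin 2))
      ((Fin r × Fin 2) ⊕ (Fin r × Fin 2)) ℝ) :=
  {g | g.det = 1 ∧ gᵀ * T1mat r * g = T1mat r ∧ gᵀ * T2mat A * g = T2mat A}

/-- The bracket of `n = v ⊕ ℝ²` extended to all of `n` (the center is central). -/
def fullBrkt {r : ℕ} (A : Matrix (Fin r × Fin 2) (Fin r × Fin 2) ℝ)
    (u v : (((Fin r × Fin 2) ⊕ (Fin r × Fin 2)) ⊕ Fin 2) → ℝ) :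
    (((Fin r × Fin 2) ⊕ (Fin r × Fin 2)) ⊕ Fin 2) → ℝ :=
  Sum.elim 0 (brkt A (u ∘ Sum.inl) (v ∘ Sum.inl))

/-- The derivations of `n`, i.e. the Lie algebra of `Aut(n)`; `dim Aut(n)` is its
dimension. -/
def derivs {r : ℕ} (A : Matrix (Fin r × Fin 2) (Fin r × Fin 2) ℝ) :
    Set (Matrix ((((Fin r × Fin 2) ⊕ (Fin r × Fin 2)) ⊕ Fin 2))
      ((((Fin r × Fin 2) ⊕ (Fin r × Fin 2)) ⊕ Fin 2)) ℝ) :=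
  {X | ∀ u v, X.mulVec (fullBrkt A u v) =
    fullBrkt A (X.mulVec u) v + fullBrkt A u (X.mulVec v)}

/-!
The two components of the bracket satisfy `ψ(u, v) = -φ(u, Dv)` with `D = diag(Aᵀ, A)`, so a map
preserving `φ` preserves `ψ` if and only if it commutes with `D`. The normalized semisimple part of
`D` is a polynomial in `D` (Jordan–Chevalley), so it commutes with everything that `D` commutes
with; this is `G₀(n) ⊆ G₀(n̂)`.

For the dimensions, send a derivation to the first row of the matrix `S` of its action on the
center. Over `n̂` this map is onto. If the row vanishes for a derivation of `n`, its action `P` on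
`v` is infinitesimally symplectic and `[P, D]` lies in the span of `1` and `D`. The traces of
`[P, D]` and of `[P, D] I`, for `I` the normalized semisimple part of `D`, both vanish, which forces
`[P, D] = 0` and `S = 0`; so `P` commutes with `I` and the derivation is one of `n̂` as well.
-/

open scoped Kronecker

theorem mul_mul_mul_eq_iff_commute {M : Type*} [Monoid M] {g h k w : M} (hhw : IsUnit (h * w))
    (hw : h * w * g = w) : h * (w * k) * g = w * k ↔ Commute g k := by
  calc h * (w * k) * g = w * k
    _ ↔ h * w * (k * g) = h * w * (g * k) := by simp only [← mul_assoc, hw]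
    _ ↔ Commute g k := by rw [hhw.mul_right_inj, eq_comm, Commute, SemiconjBy]

section LinearAlgebra

variable {𝕜 E F : Type*} [Field 𝕜] [AddCommGroup E] [Module 𝕜 E]
  [AddCommGroup F] [Module 𝕜 F]

theorem isSemisimple_of_sq_eq_algebraMap {s : Module.End 𝕜 E} {c : 𝕜} (h2 : (2 : 𝕜) ≠ 0)
    (hc : c ≠ 0) (hs : s ^ 2 = algebraMap 𝕜 (Module.End 𝕜 E) c) : s.IsSemisimple := by
  have hsep : (Polynomial.X ^ 2 - Polynomial.C c).Separable :=
    Polynomial.separable_X_pow_sub_C c (by exact_mod_cast h2) hc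
  exact Module.End.isSemisimple_of_squarefree_aeval_eq_zero hsep.squarefree (by simp [hs])

variable [FiniteDimensional 𝕜 E]

theorem finrank_map_add_finrank_inf_ker (f : E →ₗ[𝕜] F) (W : Submodule 𝕜 E) :
    Module.finrank 𝕜 (W.map f) + Module.finrank 𝕜 (W ⊓ LinearMap.ker f : Submodule 𝕜 E) =
      Module.finrank 𝕜 W := by
  rw [← Submodule.map_comap_subtype, Submodule.finrank_map_subtype_eq, ← LinearMap.ker_domRestrict,
    ← LinearMap.range_domRestrict, LinearMap.finrank_range_add_finrank_ker]

theorem finrank_le_finrank_of_map_le_of_inf_ker_le {f : E →ₗ[𝕜] F} {W W' : Submodule 𝕜 E}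
    (hmap : W.map f ≤ W'.map f) (hker : W ⊓ LinearMap.ker f ≤ W') :
    Module.finrank 𝕜 W ≤ Module.finrank 𝕜 W' := by
  rw [← finrank_map_add_finrank_inf_ker f W, ← finrank_map_add_finrank_inf_ker f W']
  exact add_le_add (Submodule.finrank_mono hmap)
    (Submodule.finrank_mono (le_inf hker inf_le_right))

theorem commute_semisimple_of_commute_add [PerfectField 𝕜] {g n s : Module.End 𝕜 E}
    (hn : IsNilpotent n) (hs : s.IsSemisimple) (hns : Commute n s) (hg : Commute g (n + s)) :
    Commute g s := by
  obtain ⟨n₀, hn₀, s₀, hs₀, hn₀_nil, hs₀_ss, h⟩ := (n + s).exists_isNilpotent_isSemisimple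
  have hns₀ : Commute n₀ s₀ := Algebra.commute_of_mem_adjoin_singleton_of_commute hs₀
    (Algebra.commute_of_mem_adjoin_self hn₀).symm
  obtain ⟨-, rfl⟩ :=
    Module.End.isNilpotent_isSemisimple_unique hn hs hn₀_nil hs₀_ss hns hns₀ h
  exact Algebra.commute_of_mem_adjoin_singleton_of_commute hs₀ hg

end LinearAlgebra

section Matrix

variable {n R : Type*}

theorem isNilpotent_of_forall_le_eq_zero [Fintype n] [DecidableEq n] [Semiring R]
    {M : Matrix n n R} (d : n → ℕ) (hM : ∀ i j, d i ≤ d j → M i j = 0) : IsNilpotent M := by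
  have hpow (k : ℕ) : ∀ i j, d i < d j + k → (M ^ k) i j = 0 := by
    induction k with
    | zero => exact fun i j hij => one_apply_ne (by rintro rfl; simp at hij)
    | succ k ih =>
      intro i j hij
      rw [pow_succ, mul_apply]
      refine Finset.sum_eq_zero fun m _ => ?_
      rcases le_or_gt (d m) (d j) with hmj | hmj
      · rw [hM m j hmj, mul_zero]
      · rw [ih i m (by omega), zero_mul]
  refine ⟨Finset.univ.sup d + 1, ext fun i j => hpow _ i j ?_⟩
  have := Finset.le_sup (f := d) (Finset.mem_univ i)
  omega

theorem eq_of_forall_dotProduct_mulVec [Fintype n] [NonAssocSemiring R]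
    {M N : Matrix n n R} (h : ∀ u v, u ⬝ᵥ M *ᵥ v = u ⬝ᵥ N *ᵥ v) : M = N := by
  classical
  ext i j
  simpa using h (Pi.single i 1) (Pi.single j 1)

theorem dotProduct_transpose_mul_add_mul_mulVec [Fintype n] [CommSemiring R]
    (P T : Matrix n n R) (u v : n → R) :
    u ⬝ᵥ (Pᵀ * T + T * P) *ᵥ v = (P *ᵥ u) ⬝ᵥ T *ᵥ v + u ⬝ᵥ T *ᵥ (P *ᵥ v) := by
  rw [add_mulVec, dotProduct_add, ← mulVec_mulVec, ← mulVec_mulVec, dotProduct_mulVec u Pᵀ,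
    vecMul_transpose]

theorem eq_zero_of_trace_smul_one_add_smul_eq_zero [Fintype n] [DecidableEq n] [Nonempty n]
    {I : Matrix n n ℝ} (hI : I * I = -1) {x y : ℝ} (h : (x • 1 + y • I).trace = 0)
    (hmul : ((x • 1 + y • I) * I).trace = 0) : x = 0 ∧ y = 0 := by
  simp only [add_mul, smul_mul_assoc, one_mul, hI, trace_add, trace_smul, trace_one, trace_neg,
    smul_eq_mul] at h hmul
  have hpos : 0 < (Fintype.card n : ℝ) ^ 2 + I.trace ^ 2 := by positivity
  constructor
  · refine (mul_eq_zero_iff_right hpos.ne').mp ?_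
    linear_combination (Fintype.card n : ℝ) * h + I.trace * hmul
  · refine (mul_eq_zero_iff_right hpos.ne').mp ?_
    linear_combination I.trace * h - (Fintype.card n : ℝ) * hmul

/-- `I` is the semisimple part of `A`, normalized to have eigenvalues `±i`: the Jordan
decomposition of `A` is `N + (a + b I)` with `I² = -1` and `b ≠ 0`. -/
structure IsNormalizedSemisimplePart [Fintype n] [DecidableEq n] (I A : Matrix n n ℝ) : Prop where
  mul_self : I * I = -1
  exists_eq : ∃ (a b : ℝ) (N : Matrix n n ℝ), b ≠ 0 ∧ IsNilpotent N ∧ Commute N I ∧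
    A = N + (a • 1 + b • I)

namespace IsNormalizedSemisimplePart

variable [Fintype n] [DecidableEq n] {I A P : Matrix n n ℝ}

theorem commute_of_commute (h : IsNormalizedSemisimplePart I A) (hP : Commute P A) :
    Commute P I := by
  obtain ⟨a, b, N, hb, hN, hNI, rfl⟩ := h.exists_eq
  let φ : Matrix n n ℝ ≃ₐ[ℝ] Module.End ℝ (n → ℝ) := toLinAlgEquiv'
  have hI_ss : (φ I).IsSemisimple :=
    isSemisimple_of_sq_eq_algebraMap (c := -1) two_ne_zero (by norm_num)
      (by rw [← map_pow, sq, h.mul_self]; simp)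
  have hbI : (φ (b • I)).IsSemisimple := by
    rw [map_smul]
    exact Module.End.IsSemisimple_smul b hI_ss
  have hPA : Commute P (N + b • I) := by
    have := hP.sub_right ((Commute.one_right P).smul_right a)
    rwa [show N + (a • 1 + b • I) - a • 1 = N + b • I by abel] at this
  have hφ : Commute (φ P) (φ (b • I)) := commute_semisimple_of_commute_add (hN.map φ) hbI
    ((hNI.smul_right b).map φ) (by simpa using hPA.map φ)
  simpa [hb] using (hφ.of_map φ.injective).smul_right b⁻¹

theorem eq_zero_of_trace_eq_zero [Nonempty n] (h : IsNormalizedSemisimplePart I A) {α β : ℝ}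
    (htr : (α • 1 + β • A).trace = 0) (htr_mul : ((α • 1 + β • A) * I).trace = 0) :
    α = 0 ∧ β = 0 := by
  obtain ⟨a, b, N, hb, hN, hNI, rfl⟩ := h.exists_eq
  have hN_tr : N.trace = 0 := (isNilpotent_trace_of_isNilpotent hN).eq_zero
  have hNI_tr : (N * I).trace = 0 :=
    (isNilpotent_trace_of_isNilpotent (hNI.isNilpotent_mul_right hN)).eq_zero
  have hsplit : α • 1 + β • (N + (a • 1 + b • I)) =
      β • N + ((α + β * a) • 1 + (β * b) • I) := by module
  rw [hsplit, trace_add, trace_smul, hN_tr, smul_zero, zero_add] at htr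
  rw [hsplit, add_mul, trace_add, smul_mul_assoc, trace_smul, hNI_tr, smul_zero, zero_add]
    at htr_mul
  obtain ⟨hα, hβ⟩ := eq_zero_of_trace_smul_one_add_smul_eq_zero h.mul_self htr htr_mul
  obtain rfl : β = 0 := (mul_eq_zero_iff_right hb).mp hβ
  exact ⟨by simpa using hα, rfl⟩

theorem eq_zero_of_commutator_eq [Nonempty n] (h : IsNormalizedSemisimplePart I A) {α β : ℝ}
    (hP : P * A - A * P = α • 1 + β • A) : α = 0 ∧ β = 0 := by
  have hAI : Commute A I := h.commute_of_commute (Commute.refl A)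
  apply h.eq_zero_of_trace_eq_zero <;> rw [← hP]
  · rw [trace_sub, trace_mul_comm, sub_self]
  · rw [sub_mul, trace_sub, mul_assoc, hAI.eq, ← mul_assoc, trace_mul_comm, mul_assoc A P I,
      sub_self]

end IsNormalizedSemisimplePart

/-- The operator `diag(Aᵀ, A)` relating the two components of the bracket through
`ψ(u, v) = -φ(u, diag(Aᵀ, A) v)`. -/
def formOperator [Zero R] (A : Matrix n n R) : Matrix (n ⊕ n) (n ⊕ n) R :=
  fromBlocks Aᵀ 0 0 A

section FormOperator

variable [CommRing R]

theorem formOperator_add (A B : Matrix n n R) :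
    formOperator (A + B) = formOperator A + formOperator B := by
  simp [formOperator, fromBlocks_add]

theorem formOperator_smul (a : R) (A : Matrix n n R) :
    formOperator (a • A) = a • formOperator A := by
  simp [formOperator, fromBlocks_smul]

theorem formOperator_one [DecidableEq n] : formOperator (1 : Matrix n n R) = 1 := by
  simp [formOperator]

theorem formOperator_neg_one [DecidableEq n] : formOperator (-1 : Matrix n n R) = -1 := by
  rw [← neg_one_smul R, formOperator_smul, formOperator_one, neg_one_smul]

variable [Fintype n]

theorem formOperator_mul {A B : Matrix n n R} (h : Commute A B) :
    formOperator (A * B) = formOperator A * formOperator B := by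
  simp [formOperator, fromBlocks_multiply, ← transpose_mul, h.eq]

variable [DecidableEq n]

theorem formOperator_pow (A : Matrix n n R) (k : ℕ) :
    formOperator (A ^ k) = formOperator A ^ k := by
  induction k with
  | zero => simp [formOperator_one]
  | succ k ih => rw [pow_succ, formOperator_mul (Commute.pow_self A k), ih, pow_succ]

theorem formOperator_transpose_mul_J (A : Matrix n n R) :
    (formOperator A)ᵀ * J n R = J n R * formOperator A := by
  simp [formOperator, J, fromBlocks_multiply, fromBlocks_transpose]

theorem IsNormalizedSemisimplePart.formOperator {I A : Matrix n n ℝ}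
    (h : IsNormalizedSemisimplePart I A) :
    IsNormalizedSemisimplePart (formOperator I) (formOperator A) := by
  obtain ⟨a, b, N, hb, ⟨k, hk⟩, hNI, rfl⟩ := h.exists_eq
  refine ⟨?_, a, b, _root_.formOperator N, hb, ⟨k, ?_⟩, ?_, ?_⟩
  · rw [← formOperator_mul (Commute.refl I), h.mul_self, formOperator_neg_one]
  · rw [← formOperator_pow, hk, ← zero_smul ℝ 1, formOperator_smul, zero_smul]
  · rw [Commute, SemiconjBy, ← formOperator_mul hNI, hNI.eq, formOperator_mul hNI.symm]
  · simp only [formOperator_add, formOperator_smul, formOperator_one]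

end FormOperator

end Matrix

section NormalForm

theorem Ahat_eq_kronecker (r : ℕ) :
    Ahat r = (1 : Matrix (Fin r) (Fin r) ℝ) ⊗ₖ Zmat Complex.I := by
  ext p q
  simp [Ahat, one_apply]

theorem Zmat_I_mul_self : Zmat Complex.I * Zmat Complex.I = -1 := by
  ext i j
  fin_cases i <;> fin_cases j <;> simp [Zmat, mul_apply]

theorem Ahat_mul_self (r : ℕ) : Ahat r * Ahat r = -1 := by
  rw [Ahat_eq_kronecker, ← mul_kronecker_mul, Zmat_I_mul_self, one_mul, ← neg_one_smul ℝ,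
    kronecker_smul, one_kronecker_one, neg_one_smul]

/-- The nilpotent part of `A(c,r)`: the block matrix with `I₂` on the block subdiagonal. -/
def blockShift (r : ℕ) : Matrix (Fin r × Fin 2) (Fin r × Fin 2) ℝ :=
  of (fun p q : Fin r => if (p : ℕ) = q + 1 then 1 else 0) ⊗ₖ 1

theorem isNilpotent_blockShift (r : ℕ) : IsNilpotent (blockShift r) := by
  refine isNilpotent_of_forall_le_eq_zero (fun p => p.1) fun p q hpq => ?_
  have hne : (p.1 : ℕ) ≠ q.1 + 1 := by omega
  simp [blockShift, hne]

theorem commute_blockShift_Ahat (r : ℕ) : Commute (blockShift r) (Ahat r) := by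
  rw [Commute, SemiconjBy, Ahat_eq_kronecker, blockShift, ← mul_kronecker_mul,
    ← mul_kronecker_mul]
  simp only [mul_one, one_mul]

theorem Zmat_eq (c : ℂ) : Zmat c = c.re • 1 + c.im • Zmat Complex.I := by
  ext i j
  fin_cases i <;> fin_cases j <;> simp [Zmat]

theorem Amat_eq (c : ℂ) (r : ℕ) :
    Amat c r = blockShift r + (c.re • 1 + c.im • Ahat r) := by
  ext ⟨p, i⟩ ⟨q, j⟩
  rcases eq_or_ne p q with rfl | hpq
  · simp [Amat, Ahat, blockShift, Zmat_eq c, one_apply]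
  · simp [Amat, Ahat, blockShift, hpq]

theorem isNormalizedSemisimplePart_Ahat {c : ℂ} (hc : c.im ≠ 0) (r : ℕ) :
    IsNormalizedSemisimplePart (Ahat r) (Amat c r) :=
  ⟨Ahat_mul_self r, c.re, c.im, blockShift r, hc, isNilpotent_blockShift r,
    commute_blockShift_Ahat r, Amat_eq c r⟩

end NormalForm

section Bracket

variable {r : ℕ} {A I : Matrix (Fin r × Fin 2) (Fin r × Fin 2) ℝ}

theorem T2mat_eq (A : Matrix (Fin r × Fin 2) (Fin r × Fin 2) ℝ) :
    T2mat A = -(T1mat r * formOperator A) := by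
  simp [T2mat, T1mat, formOperator, fromBlocks_multiply, fromBlocks_neg]

theorem isUnit_T1mat (r : ℕ) : IsUnit (T1mat r) :=
  (isUnit_iff_isUnit_det _).mpr (isUnit_det_J _ _)

theorem mem_G0_iff {g : Matrix _ _ ℝ} :
    g ∈ G0 A ↔ g ∈ symplecticGroup (Fin r × Fin 2) ℝ ∧ Commute g (formOperator A) := by
  have hforms (hg : g ∈ symplecticGroup (Fin r × Fin 2) ℝ) :
      gᵀ * T2mat A * g = T2mat A ↔ Commute g (formOperator A) := by
    have hunit : IsUnit (gᵀ * T1mat r) :=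
      ((isUnit_iff_isUnit_det _).mpr
        (SymplecticGroup.symplectic_det (SymplecticGroup.transpose_mem hg))).mul (isUnit_T1mat r)
    rw [T2mat_eq, mul_neg, neg_mul, neg_inj]
    exact mul_mul_mul_eq_iff_commute hunit (SymplecticGroup.mem_iff'.mp hg)
  constructor
  · rintro ⟨-, hφ, hψ⟩
    have hg := SymplecticGroup.mem_iff'.mpr hφ
    exact ⟨hg, (hforms hg).mp hψ⟩
  · rintro ⟨hg, hcomm⟩
    exact ⟨SymplecticGroup.det_eq_one hg, SymplecticGroup.mem_iff'.mp hg, (hforms hg).mpr hcomm⟩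

theorem G0_subset_G0 (h : IsNormalizedSemisimplePart I A) : G0 A ⊆ G0 I := by
  intro g hg
  rw [mem_G0_iff] at hg ⊢
  exact ⟨hg.1, h.formOperator.commute_of_commute hg.2⟩

theorem eq_zero_of_forall_brkt_eq_zero {u : _ → ℝ} (h : ∀ v, brkt A u v = 0) : u = 0 := by
  refine vecMul_injective_of_isUnit (isUnit_T1mat r) (dotProduct_eq _ _ fun v => ?_)
  simpa [brkt, dotProduct_mulVec] using congrFun (h v) 0

theorem forall_mulVec_brkt_eq_iff {P : Matrix _ _ ℝ} {S : Matrix (Fin 2) (Fin 2) ℝ} :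
    (∀ u v, S *ᵥ brkt A u v = brkt A (P *ᵥ u) v + brkt A u (P *ᵥ v)) ↔
      Pᵀ * T1mat r + T1mat r * P = S 0 0 • T1mat r + S 0 1 • T2mat A ∧
      Pᵀ * T2mat A + T2mat A * P = S 1 0 • T1mat r + S 1 1 • T2mat A := by
  have hrow (i : Fin 2) (T : Matrix _ _ ℝ) :
      Pᵀ * T + T * P = S i 0 • T1mat r + S i 1 • T2mat A ↔
        ∀ u v, (S *ᵥ brkt A u v) i = (P *ᵥ u) ⬝ᵥ T *ᵥ v + u ⬝ᵥ T *ᵥ (P *ᵥ v) := by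
    have hS (u v) : (S *ᵥ brkt A u v) i = u ⬝ᵥ (S i 0 • T1mat r + S i 1 • T2mat A) *ᵥ v := by
      rw [mulVec, dotProduct, Fin.sum_univ_two]
      simp [brkt, add_mulVec, smul_mulVec]
    simp only [hS, ← dotProduct_transpose_mul_add_mul_mulVec]
    exact ⟨fun h u v => by rw [h], fun h => (eq_of_forall_dotProduct_mulVec h).symm⟩
  rw [hrow, hrow, ← forall_and]
  simp only [← forall_and, funext_iff, Fin.forall_fin_two]
  rfl

theorem brkt_zero_left (v : _ → ℝ) : brkt A 0 v = 0 := by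
  simp [brkt]

theorem fromBlocks_mem_derivs_iff {P : Matrix _ _ ℝ} {Q R S} :
    fromBlocks P Q R S ∈ derivs A ↔ ∀ u v, Q *ᵥ brkt A (u ∘ Sum.inl) (v ∘ Sum.inl) = 0 ∧
      S *ᵥ brkt A (u ∘ Sum.inl) (v ∘ Sum.inl) =
        brkt A (P *ᵥ (u ∘ Sum.inl) + Q *ᵥ (u ∘ Sum.inr)) (v ∘ Sum.inl) +
          brkt A (u ∘ Sum.inl) (P *ᵥ (v ∘ Sum.inl) + Q *ᵥ (v ∘ Sum.inr)) := by
  simp [derivs, fullBrkt, fromBlocks_mulVec, funext_iff]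

theorem mem_derivs_iff {X : Matrix _ _ ℝ} :
    X ∈ derivs A ↔ X.toBlocks₁₂ = 0 ∧ ∀ u v, X.toBlocks₂₂ *ᵥ brkt A u v =
      brkt A (X.toBlocks₁₁ *ᵥ u) v + brkt A u (X.toBlocks₁₁ *ᵥ v) := by
  conv_lhs => rw [← fromBlocks_toBlocks X, fromBlocks_mem_derivs_iff]
  constructor
  · intro hX
    have hX₁₂ : X.toBlocks₁₂ = 0 := by
      have hker (w) : X.toBlocks₁₂ *ᵥ w = 0 := eq_zero_of_forall_brkt_eq_zero (A := A) fun v => by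
        simpa [brkt_zero_left] using (hX (Sum.elim 0 w) (Sum.elim v 0)).2.symm
      exact ext_of_mulVec_single fun j => by rw [hker, zero_mulVec]
    exact ⟨hX₁₂, fun u v => by simpa [hX₁₂] using (hX (Sum.elim u 0) (Sum.elim v 0)).2⟩
  · rintro ⟨hX₁₂, hX⟩ u v
    simp [hX₁₂, hX]

theorem transpose_mul_T2mat_add {P : Matrix _ _ ℝ} (hP : Pᵀ * T1mat r + T1mat r * P = 0) :
    Pᵀ * T2mat A + T2mat A * P =
      T1mat r * (P * formOperator A - formOperator A * P) := by
  rw [T2mat_eq, mul_neg, ← mul_assoc, eq_neg_of_add_eq_zero_left hP]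
  noncomm_ring

theorem eq_zero_and_commute_of_transpose_mul_T2mat_add_eq [Nonempty (Fin r × Fin 2)]
    (h : IsNormalizedSemisimplePart I A) {P : Matrix _ _ ℝ} {α β : ℝ}
    (hφ : Pᵀ * T1mat r + T1mat r * P = 0)
    (hψ : Pᵀ * T2mat A + T2mat A * P = α • T1mat r + β • T2mat A) :
    α = 0 ∧ β = 0 ∧ Commute P (formOperator I) := by
  have hcommutator : P * formOperator A - formOperator A * P =
      α • 1 + (-β) • formOperator A := by
    refine (isUnit_T1mat r).mul_left_cancel ?_
    rw [← transpose_mul_T2mat_add hφ, hψ, T2mat_eq, mul_add, mul_smul_comm, mul_smul_comm, mul_one]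
    module
  obtain ⟨rfl, hβ⟩ := h.formOperator.eq_zero_of_commutator_eq hcommutator
  refine ⟨rfl, neg_eq_zero.mp hβ, h.formOperator.commute_of_commute (sub_eq_zero.mp ?_)⟩
  rw [hcommutator, hβ, zero_smul, zero_smul, add_zero]

theorem mem_derivs_of_isNormalizedSemisimplePart [Nonempty (Fin r × Fin 2)]
    (h : IsNormalizedSemisimplePart I A) {X : Matrix _ _ ℝ} (hX : X ∈ derivs A)
    (hrow : X.toBlocks₂₂ 0 = 0) : X ∈ derivs I := by
  rw [mem_derivs_iff, forall_mulVec_brkt_eq_iff] at hX ⊢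
  obtain ⟨hX₁₂, hφ, hψ⟩ := hX
  simp only [hrow, Pi.zero_apply, zero_smul, add_zero] at hφ ⊢
  obtain ⟨hα, hβ, hcomm⟩ := eq_zero_and_commute_of_transpose_mul_T2mat_add_eq h hφ hψ
  refine ⟨hX₁₂, hφ, ?_⟩
  rw [transpose_mul_T2mat_add hφ, hcomm.eq, sub_self, mul_zero, hα, hβ, zero_smul, zero_smul,
    add_zero]

/-- The linear map sending `X` to the first row of its central block `X|_𝔷`. -/
def centralRow (r : ℕ) :
    Matrix (((Fin r × Fin 2) ⊕ (Fin r × Fin 2)) ⊕ Fin 2)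
      (((Fin r × Fin 2) ⊕ (Fin r × Fin 2)) ⊕ Fin 2) ℝ →ₗ[ℝ] Fin 2 → ℝ :=
  LinearMap.pi fun j => entryLinearMap ℝ ℝ (Sum.inr 0) (Sum.inr j)

theorem exists_mem_derivs_centralRow_eq (hI : I * I = -1) (y : Fin 2 → ℝ) :
    ∃ X ∈ derivs I, centralRow r X = y := by
  have hD : formOperator I * formOperator I = -1 := by
    rw [← formOperator_mul (Commute.refl I), hI, formOperator_neg_one]
  have hφ : (formOperator I)ᵀ * T1mat r = T1mat r * formOperator I :=
    formOperator_transpose_mul_J I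
  refine ⟨fromBlocks ((y 0 / 2) • 1 - (y 1 / 2) • formOperator I) 0 0 !![y 0, y 1; -y 1, y 0],
    ?_, ?_⟩
  · rw [mem_derivs_iff, forall_mulVec_brkt_eq_iff, T2mat_eq]
    refine ⟨rfl, ?_, ?_⟩
    · simp only [toBlocks_fromBlocks₁₁, toBlocks_fromBlocks₂₂, transpose_sub, transpose_smul,
        transpose_one, sub_mul, mul_sub, smul_mul_assoc, mul_smul_comm, one_mul, mul_one, hφ,
        smul_neg, of_apply, cons_val', cons_val_zero, cons_val_one, cons_val_fin_one]
      module
    · have hDφ : (formOperator I)ᵀ * (T1mat r * formOperator I) = -T1mat r := by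
        rw [← mul_assoc, hφ, mul_assoc, hD, mul_neg_one]
      have hφD : T1mat r * formOperator I * formOperator I = -T1mat r := by
        rw [mul_assoc, hD, mul_neg_one]
      simp only [toBlocks_fromBlocks₁₁, toBlocks_fromBlocks₂₂, transpose_sub, transpose_smul,
        transpose_one, sub_mul, mul_sub, smul_mul_assoc, mul_smul_comm, one_mul, mul_one, mul_neg,
        neg_mul, hDφ, hφD, smul_neg, of_apply, cons_val', cons_val_zero, cons_val_one,
        cons_val_fin_one]
      module
  · ext j
    fin_cases j <;> simp [centralRow]

theorem finrank_le_finrank_of_eq_derivs (h : IsNormalizedSemisimplePart I A)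
    {W W' : Submodule ℝ (Matrix (((Fin r × Fin 2) ⊕ (Fin r × Fin 2)) ⊕ Fin 2)
      (((Fin r × Fin 2) ⊕ (Fin r × Fin 2)) ⊕ Fin 2) ℝ)}
    (hW : (W : Set _) = derivs A) (hW' : (W' : Set _) = derivs I) :
    Module.finrank ℝ W ≤ Module.finrank ℝ W' := by
  rcases isEmpty_or_nonempty (Fin r × Fin 2) with _ | _
  · obtain rfl := Subsingleton.elim A I
    rw [SetLike.coe_injective (hW.trans hW'.symm)]
  · refine finrank_le_finrank_of_map_le_of_inf_ker_le (f := centralRow r) ?_ ?_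
    · rintro y -
      obtain ⟨X, hX, hXy⟩ := exists_mem_derivs_centralRow_eq h.mul_self y
      exact ⟨X, hW'.symm ▸ hX, hXy⟩
    · rintro X ⟨hX, hrow⟩
      rw [hW] at hX
      rw [← SetLike.mem_coe, hW']
      exact mem_derivs_of_isNormalizedSemisimplePart h hX hrow

end Bracket

theorem stmt15_general {r : ℕ} {A I : Matrix (Fin r × Fin 2) (Fin r × Fin 2) ℝ}
    (h : IsNormalizedSemisimplePart I A) :
    G0 A ⊆ G0 I ∧
    ∀ W What : Submodule ℝ (Matrix (((Fin r × Fin 2) ⊕ (Fin r × Fin 2)) ⊕ Fin 2)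
        (((Fin r × Fin 2) ⊕ (Fin r × Fin 2)) ⊕ Fin 2) ℝ),
      (W : Set _) = derivs A → (What : Set _) = derivs I →
      Module.finrank ℝ W ≤ Module.finrank ℝ What :=
  ⟨G0_subset_G0 h, fun _ _ => finrank_le_finrank_of_eq_derivs h⟩

/-- For the single-block normal form `n = n_{(c,r)}` (with `c` in the upper
half plane) and its H-type counterpart `n̂`, one has `G₀(n) ⊆ G₀(n̂)`, and consequently
`dim Aut(n) ≤ dim Aut(n̂)`. -/
theorem stmt15 (c : ℂ) (hc : 0 < c.im) (r : ℕ) (hr : 0 < r) :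
    G0 (Amat c r) ⊆ G0 (Ahat r) ∧
    ∀ (W What : Submodule ℝ (Matrix ((((Fin r × Fin 2) ⊕ (Fin r × Fin 2)) ⊕ Fin 2))
        ((((Fin r × Fin 2) ⊕ (Fin r × Fin 2)) ⊕ Fin 2)) ℝ)),
      (W : Set _) = derivs (Amat c r) → (What : Set _) = derivs (Ahat r) →
      Module.finrank ℝ W ≤ Module.finrank ℝ What :=
  stmt15_general (isNormalizedSemisimplePart_Ahat hc.ne' r)
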